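/- arXiv:2006.16580 — 2 statements merged into one kernel-verified Lean document; each statement's English description precedes it below -/
import Mathlib

section
/- Let M be a symmetric n×n integer matrix all of whose diagonal entries equal 2. If M is congruent over ℤ to C_{A_n} (that is, M = Pᵀ C_{A_n} P for some P ∈ GL(n,ℤ)), then M is represented by the root system A_n: there exists an n×(n+1) integer matrix K, each of whose rows is of the form ±(e_i − e_j) for some 1 ≤ i < j ≤ n+1, such that M = K Kᵀ. -/
open Matrix

/-- The Cartan matrix of the Dynkin diagram `Aₙ`. -/
def CartanA (n : ℕ) : Matrix (Fin n) (Fin n) ℤ :=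
  Matrix.of fun i j =>
    if i = j then 2
    else if (i : ℤ) - (j : ℤ) = 1 ∨ (j : ℤ) - (i : ℤ) = 1 then -1
    else 0

/-- A vector of the root system `Aₙ`: `±(eᵢ - eⱼ)` for some `i < j`. -/
def IsRootAn {n : ℕ} (v : Fin (n + 1) → ℤ) : Prop :=
  ∃ a b : Fin (n + 1), a < b ∧
    (v = Pi.single a 1 - Pi.single b 1 ∨ v = -(Pi.single a 1 - Pi.single b 1))

/-- The matrix whose rows are the simple roots `eᵢ - eᵢ₊₁` of the root system `Aₙ`. -/
def simpleRootsA (n : ℕ) : Matrix (Fin n) (Fin (n + 1)) ℤ :=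
  Matrix.of fun i => Pi.single i.castSucc 1 - Pi.single i.succ 1

theorem simpleRootsA_mul_transpose (n : ℕ) :
    simpleRootsA n * (simpleRootsA n)ᵀ = CartanA n := by
  ext i j
  have hentry : (simpleRootsA n * (simpleRootsA n)ᵀ) i j =
      (Pi.single i.castSucc 1 - Pi.single i.succ 1 : Fin (n + 1) → ℤ) ⬝ᵥ
        (Pi.single j.castSucc 1 - Pi.single j.succ 1) := rfl
  rw [hentry]
  simp only [sub_dotProduct, single_dotProduct, Pi.sub_apply, Pi.single_apply, Fin.ext_iff,
    Fin.val_castSucc, Fin.val_succ, CartanA, Matrix.of_apply, one_mul]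
  split_ifs <;> omega

theorem simpleRootsA_mulVec_one (n : ℕ) : simpleRootsA n *ᵥ 1 = 0 := by
  ext i
  have hentry : (simpleRootsA n *ᵥ 1) i =
      (Pi.single i.castSucc 1 - Pi.single i.succ 1 : Fin (n + 1) → ℤ) ⬝ᵥ 1 := rfl
  rw [hentry]
  simp [sub_dotProduct]

/-- An integer vector of squared norm `2` with coordinate sum `0` has the form `eₐ - e_b`. -/
theorem exists_eq_single_sub_single {ι : Type*} [Fintype ι] [DecidableEq ι] {v : ι → ℤ}
    (hsum : v ⬝ᵥ 1 = 0) (hnorm : v ⬝ᵥ v = 2) :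
    ∃ a b : ι, a ≠ b ∧ v = Pi.single a 1 - Pi.single b 1 := by
  have hne : ∃ i ∈ Finset.univ, v i ≠ 0 := by
    by_contra! h
    have hv : v = 0 := funext fun i => h i (Finset.mem_univ i)
    simp [hv] at hnorm
  have hsum' : ∑ i, v i = 0 := by simpa [dotProduct] using hsum
  obtain ⟨a, -, ha⟩ := Finset.exists_pos_of_sum_zero_of_exists_nonzero v hsum' hne
  obtain ⟨b, -, hb⟩ := Finset.exists_pos_of_sum_zero_of_exists_nonzero (fun i => -v i)
    (by simpa using hsum') (by simpa using hne)
  have hab : a ≠ b := by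
    rintro rfl
    omega
  refine ⟨a, b, hab, ?_⟩
  obtain ⟨r, hr⟩ : ∃ r : ι → ℤ, r = Pi.single a 1 - Pi.single b 1 := ⟨_, rfl⟩
  rw [← hr]
  have hdist : (v - r) ⬝ᵥ (v - r) = 4 - 2 * (v a - v b) := by
    have hvr : v ⬝ᵥ r = v a - v b := by simp [hr, dotProduct_sub]
    have hrr : r ⬝ᵥ r = 2 := by simp [hr, hab, hab.symm]
    rw [sub_dotProduct, dotProduct_sub, dotProduct_sub, dotProduct_comm r v, hnorm, hvr, hrr]
    ring
  have hnonneg : 0 ≤ (v - r) ⬝ᵥ (v - r) := Finset.sum_nonneg fun i _ => mul_self_nonneg _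
  exact sub_eq_zero.mp (dotProduct_self_eq_zero.mp (by omega))

theorem isRootAn_of_dotProduct {n : ℕ} {v : Fin (n + 1) → ℤ}
    (hsum : v ⬝ᵥ 1 = 0) (hnorm : v ⬝ᵥ v = 2) : IsRootAn v := by
  obtain ⟨a, b, hab, hv⟩ := exists_eq_single_sub_single hsum hnorm
  rcases lt_or_gt_of_ne hab with h | h
  · exact ⟨a, b, h, Or.inl hv⟩
  · exact ⟨b, a, h, Or.inr (by rw [hv, neg_sub])⟩

/-- A symmetric integer matrix with `2`'s on the diagonal that is congruent
over `ℤ` to `C_{Aₙ}` is represented by the root system `Aₙ`. -/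
theorem represented_by_rootSystem_of_congruent_cartanA
    (n : ℕ) (M : Matrix (Fin n) (Fin n) ℤ)
    (hsymm : Mᵀ = M) (hdiag : ∀ i, M i i = 2)
    (hcong : ∃ P : Matrix (Fin n) (Fin n) ℤ, IsUnit P.det ∧
      M = Pᵀ * CartanA n * P) :
    ∃ K : Matrix (Fin n) (Fin (n + 1)) ℤ,
      (∀ i : Fin n, IsRootAn (K i)) ∧ M = K * Kᵀ := by
  obtain ⟨P, -, hM⟩ := hcong
  have hfactor : M = (Pᵀ * simpleRootsA n) * (Pᵀ * simpleRootsA n)ᵀ := by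
    rw [hM, ← simpleRootsA_mul_transpose, transpose_mul, transpose_transpose]
    simp only [Matrix.mul_assoc]
  refine ⟨Pᵀ * simpleRootsA n, fun i => isRootAn_of_dotProduct ?_ ?_, hfactor⟩
  · have hsum : (Pᵀ * simpleRootsA n) *ᵥ 1 = 0 := by
      rw [← mulVec_mulVec, simpleRootsA_mulVec_one, mulVec_zero]
    exact congrFun hsum i
  · exact (congrFun (congrFun hfactor i) i).symm.trans (hdiag i)
end

section
/- Let G be a finite, connected simple graph on the vertex set Fin n and let A be a symmetric n×n integer matrix with A_{ij} ∈ {1, −1} whenever i and j are adjacent in G and A_{ij} = 0 otherwise (so (G, A) is a signed graph with underlying graph G). If the matrix M = 2I + A is congruent over ℤ to C_{A_n} (that is, M = Pᵀ C_{A_n} P for some P ∈ GL(n,ℤ)), then G is isomorphic to the line graph of a tree: there exists a finite simple graph T that is connected and acyclic such that G is isomorphic to the line graph L(T). -/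
open Matrix

/-- The vector `e a - e b` of a root lattice of type `A`. -/
def rootVec {m : ℕ} (a b : Fin m) : Fin m → ℤ := Pi.single a 1 - Pi.single b 1

theorem dotProduct_rootVec {m : ℕ} (f : Fin m → ℤ) (a b : Fin m) :
    f ⬝ᵥ rootVec a b = f a - f b := by
  simp [rootVec, dotProduct_sub]

/-- An integer vector with coordinate sum `0` and squared norm `2` is a root. -/
theorem exists_eq_rootVec {m : ℕ} (w : Fin m → ℤ) (hsum : ∑ k, w k = 0)
    (hsq : w ⬝ᵥ w = 2) : ∃ a b, a ≠ b ∧ w = rootVec a b := by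
  have hne : ∃ k, w k ≠ 0 := by
    by_contra! h
    simp [dotProduct, h] at hsq
  obtain ⟨k, hk⟩ := hne
  obtain ⟨a, -, ha⟩ := Finset.exists_pos_of_sum_zero_of_exists_nonzero w hsum
    ⟨k, Finset.mem_univ k, hk⟩
  obtain ⟨b, -, hb⟩ := Finset.exists_pos_of_sum_zero_of_exists_nonzero (fun k => -w k)
    (by simp [hsum]) ⟨k, Finset.mem_univ k, by simpa using hk⟩
  have hab : a ≠ b := by
    rintro rfl
    omega
  have hpart (s : Finset (Fin m)) : ∑ k ∈ s, w k * w k ≤ 2 := by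
    rw [← hsq]
    exact Finset.sum_le_sum_of_subset_of_nonneg (Finset.subset_univ s)
      fun k _ _ => mul_self_nonneg (w k)
  have hpair := hpart {a, b}
  rw [Finset.sum_pair hab] at hpair
  have hwa : w a = 1 := by nlinarith
  have hwb : w b = -1 := by nlinarith
  refine ⟨a, b, hab, funext fun c => ?_⟩
  by_cases hca : c = a
  · subst hca
    simp [rootVec, hab, hwa]
  by_cases hcb : c = b
  · subst hcb
    simp [rootVec, hca, hwb]
  have htriple := hpart {c, a, b}
  rw [Finset.sum_insert (by simp [hca, hcb]), Finset.sum_pair hab, hwa, hwb] at htriple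
  have hc : w c = 0 := by nlinarith [mul_self_nonneg (w c)]
  simp [rootVec, hca, hcb, hc]

/-- The matrix whose columns are the simple roots of type `Aₙ`. -/
def simpleRootMatrix (n : ℕ) : Matrix (Fin (n + 1)) (Fin n) ℤ :=
  Matrix.of fun k j => rootVec j.castSucc j.succ k

theorem vecMul_simpleRootMatrix {n : ℕ} (f : Fin (n + 1) → ℤ) (j : Fin n) :
    (f ᵥ* simpleRootMatrix n) j = f j.castSucc - f j.succ :=
  dotProduct_rootVec f j.castSucc j.succ

theorem transpose_mul_simpleRootMatrix (n : ℕ) :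
    (simpleRootMatrix n)ᵀ * simpleRootMatrix n = CartanA n := by
  ext i j
  change rootVec i.castSucc i.succ ⬝ᵥ rootVec j.castSucc j.succ = _
  rw [dotProduct_rootVec]
  simp only [rootVec, Pi.sub_apply, Pi.single_apply, CartanA, Matrix.of_apply, Fin.ext_iff,
    Fin.val_castSucc, Fin.val_succ]
  split_ifs <;> omega

/-- A function killed by the simple roots is constant. -/
theorem eq_of_vecMul_simpleRootMatrix_eq_zero {n : ℕ} {f : Fin (n + 1) → ℤ}
    (hf : f ᵥ* simpleRootMatrix n = 0) (k : Fin (n + 1)) : f k = f 0 := by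
  induction k using Fin.induction with
  | zero => rfl
  | succ j ih =>
    have := congrFun hf j
    rw [vecMul_simpleRootMatrix, Pi.zero_apply] at this
    omega

/-- The columns of an integral base change of the simple roots sum to `0`. -/
theorem sum_simpleRootMatrix_mul {n : ℕ} (P : Matrix (Fin n) (Fin n) ℤ) (i : Fin n) :
    ∑ k, (simpleRootMatrix n * P) k i = 0 := by
  have h : (1 : Fin (n + 1) → ℤ) ᵥ* simpleRootMatrix n = 0 := by
    ext j
    simp [vecMul_simpleRootMatrix]
  have h' : ((1 : Fin (n + 1) → ℤ) ᵥ* (simpleRootMatrix n * P)) i = 0 := by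
    rw [← Matrix.vecMul_vecMul, h, Matrix.zero_vecMul, Pi.zero_apply]
  simpa [Matrix.vecMul, dotProduct] using h'

/-- A connected graph on `n + 1` vertices with `n` edges is a tree. -/
theorem isTree_of_connected_of_bijective {n : ℕ} {T : SimpleGraph (Fin (n + 1))}
    (hT : T.Connected) (e : Fin n → T.edgeSet) (he : Function.Bijective e) : T.IsTree := by
  rw [SimpleGraph.isTree_iff_connected_and_card]
  refine ⟨hT, ?_⟩
  rw [← Nat.card_eq_of_bijective e he]
  simp

/-- Two distinct roots that are not opposite have nonzero inner product exactly when their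
supports meet. -/
theorem rootVec_dotProduct_ne_zero_iff {m : ℕ} {a b c d : Fin m} (hab : a ≠ b) (hcd : c ≠ d)
    (hne : s(a, b) ≠ s(c, d)) :
    rootVec a b ⬝ᵥ rootVec c d ≠ 0 ↔ ∃ v, v ∈ s(a, b) ∧ v ∈ s(c, d) := by
  have hmeet : (∃ v, v ∈ s(a, b) ∧ v ∈ s(c, d)) ↔ a = c ∨ a = d ∨ b = c ∨ b = d := by
    simp only [Sym2.mem_iff, or_and_right, exists_or, exists_eq_left]
    tauto
  rw [hmeet, dotProduct_rootVec]
  simp only [rootVec, Pi.sub_apply, Pi.single_apply]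
  simp only [ne_eq, Sym2.eq_iff] at hne
  grind

/-- Roots with the same support have inner product of absolute value `2`. -/
theorem abs_rootVec_dotProduct_of_eq {m : ℕ} {a b c d : Fin m} (hab : a ≠ b)
    (h : s(a, b) = s(c, d)) : |rootVec a b ⬝ᵥ rootVec c d| = 2 := by
  rw [dotProduct_rootVec]
  obtain ⟨rfl, rfl⟩ | ⟨rfl, rfl⟩ := Sym2.eq_iff.mp h <;>
    simp [rootVec, hab, hab.symm]

/-- Lemma 3.1: if `(G, A)` is a connected signed graph whose matrix `2I + A`
is congruent over `ℤ` to `C_{Aₙ}`, then the underlying graph `G` is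
isomorphic to the line graph of a tree. -/
theorem underlying_lineGraph_of_tree_of_congruent_cartanA
    (n : ℕ) (G : SimpleGraph (Fin n)) (hconn : G.Connected)
    (A : Matrix (Fin n) (Fin n) ℤ)
    (hsymm : Aᵀ = A)
    (hadj : ∀ i j, G.Adj i j → A i j = 1 ∨ A i j = -1)
    (hnadj : ∀ i j, ¬ G.Adj i j → A i j = 0)
    (hcong : ∃ P : Matrix (Fin n) (Fin n) ℤ, IsUnit P.det ∧
      2 • (1 : Matrix (Fin n) (Fin n) ℤ) + A = Pᵀ * CartanA n * P) :
    ∃ (m : ℕ) (T : SimpleGraph (Fin m)),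
      T.Connected ∧ T.IsAcyclic ∧ Nonempty (G ≃g T.lineGraph) := by
  obtain ⟨P, hP, hM⟩ := hcong
  set W := simpleRootMatrix n * P with hW
  have hgram : 2 • (1 : Matrix (Fin n) (Fin n) ℤ) + A = Wᵀ * W := by
    rw [hM, ← transpose_mul_simpleRootMatrix, hW, Matrix.transpose_mul]
    simp only [Matrix.mul_assoc]
  have hdot (i j : Fin n) : W.col i ⬝ᵥ W.col j = if i = j then 2 else A i j := by
    have h : (Wᵀ * W) i j = W.col i ⬝ᵥ W.col j := rfl
    rw [← h, ← hgram, Matrix.add_apply, Matrix.smul_apply, Matrix.one_apply]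
    have hdiag : A i i = 0 := hnadj i i G.irrefl
    by_cases hij : i = j
    · subst hij
      simp [hdiag]
    · simp [hij]
  have hroot (i : Fin n) : ∃ a b, a ≠ b ∧ W.col i = rootVec a b :=
    exists_eq_rootVec _ (sum_simpleRootMatrix_mul P i) (by simp [hdot])
  choose a b hab hcol using hroot
  have hinj (i j : Fin n) (h : s(a i, b i) = s(a j, b j)) : i = j := by
    by_contra hij
    have h2 := abs_rootVec_dotProduct_of_eq (hab i) h
    rw [← hcol, ← hcol, hdot, if_neg hij] at h2
    by_cases hG : G.Adj i j
    · obtain hA | hA := hadj i j hG <;> simp [hA] at h2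
    · simp [hnadj i j hG] at h2
  let T : SimpleGraph (Fin (n + 1)) :=
    SimpleGraph.fromEdgeSet (Set.range fun i => s(a i, b i))
  have hedge (i : Fin n) : s(a i, b i) ∈ T.edgeSet := by
    rw [SimpleGraph.mem_edgeSet, SimpleGraph.fromEdgeSet_adj]
    exact ⟨⟨i, rfl⟩, hab i⟩
  let e : Fin n → T.edgeSet := fun i => ⟨s(a i, b i), hedge i⟩
  have he : Function.Bijective e := by
    refine ⟨fun i j h => hinj i j (congrArg Subtype.val h), ?_⟩
    rintro ⟨x, hx⟩
    have hx' := hx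
    rw [SimpleGraph.edgeSet_fromEdgeSet] at hx'
    obtain ⟨⟨i, hi⟩, -⟩ := hx'
    exact ⟨i, Subtype.ext hi⟩
  have hT : T.Connected := by
    classical
    let f : Fin (n + 1) → ℤ := fun k => if T.Reachable 0 k then 1 else 0
    have hfW : f ᵥ* W = 0 := by
      ext i
      change f ⬝ᵥ W.col i = 0
      have hadj' : T.Adj (a i) (b i) := hedge i
      have hiff : T.Reachable 0 (a i) ↔ T.Reachable 0 (b i) :=
        ⟨fun h => h.trans hadj'.reachable, fun h => h.trans hadj'.symm.reachable⟩
      rw [hcol, dotProduct_rootVec]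
      simp [f, hiff]
    have hfB : f ᵥ* simpleRootMatrix n = 0 := by
      rw [hW, ← Matrix.vecMul_vecMul] at hfW
      have h := congrArg (· ᵥ* P⁻¹) hfW
      simpa [Matrix.vecMul_vecMul, Matrix.mul_assoc, Matrix.mul_nonsing_inv P hP] using h
    have hreach (k : Fin (n + 1)) : T.Reachable 0 k := by
      have h := eq_of_vecMul_simpleRootMatrix_eq_zero hfB k
      by_contra hk
      simp [f, hk] at h
    exact ⟨fun u v => (hreach u).symm.trans (hreach v)⟩
  refine ⟨n + 1, T, hT, (isTree_of_connected_of_bijective hT e he).isAcyclic,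
    ⟨⟨Equiv.ofBijective e he, fun {i j} => ?_⟩⟩⟩
  rw [SimpleGraph.lineGraph_adj_iff_exists, Equiv.ofBijective_apply, Equiv.ofBijective_apply]
  by_cases hij : i = j
  · subst hij
    simp
  have hne : s(a i, b i) ≠ s(a j, b j) := fun h => hij (hinj i j h)
  have hmeet := rootVec_dotProduct_ne_zero_iff (hab i) (hab j) hne
  rw [← hcol, ← hcol, hdot, if_neg hij] at hmeet
  have hGA : G.Adj i j ↔ A i j ≠ 0 := by
    refine ⟨fun h => ?_, fun h => by_contra fun hG => h (hnadj i j hG)⟩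
    obtain hA | hA := hadj i j h <;> simp [hA]
  rw [hGA, hmeet]
  exact and_iff_right fun h => hij (he.1 h)
end
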